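/- The set {F_{ih} : 1 ≤ i ≤ d, 0 ≤ h ≤ i−1} has exactly d(d+1)/2 − b nonzero elements, where b = |{i ∈ {1,…,d} : n_i = 2}| (indeed F_{ih} = 0 if and only if h = i−1 and n_i = 2). Moreover, every nonzero F_{ih} is an idempotent (F_{ih}² = F_{ih}) that commutes with every element of the Terwilliger algebra T(x₀) and spans a one-dimensional two-sided ideal of T(x₀): for every T ∈ T(x₀), T·F_{ih} is a complex scalar multiple of F_{ih}. -/

import Mathlib

open Finset Matrix

/-- Vertex set of the wreath product `K_{n 0} ≀ K_{n 1} ≀ ⋯ ≀ K_{n (d-1)}`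
(paper indices `n_1, …, n_d` correspond to `n 0, …, n (d-1)`). -/
abbrev Vx (d : ℕ) (n : ℕ → ℕ) : Type := (i : Fin d) → Fin (n i)

/-- `delta x y = 0` if `x = y`; otherwise `delta x y` is the largest (1-based)
index at which `x` and `y` differ. -/
def delta {d : ℕ} {n : ℕ → ℕ} (x y : Vx d n) : ℕ :=
  (Finset.univ.filter fun i => x i ≠ y i).sup fun i => (i : ℕ) + 1

/-- The `i`-th adjacency matrix of the wreath product: `(A i) x y = 1` iff `delta x y = i`. -/
noncomputable def A (d : ℕ) (n : ℕ → ℕ) (i : ℕ) : Matrix (Vx d n) (Vx d n) ℂ :=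
  Matrix.of fun x y => if delta x y = i then 1 else 0

/-- The valencies: `k 0 = 1` and, for `1 ≤ i`, `k i = n_1 ⋯ n_{i-1} (n_i - 1)`,
i.e. `k i = n 0 ⋯ n (i-2) * (n (i-1) - 1)`. -/
def k (n : ℕ → ℕ) (i : ℕ) : ℕ :=
  if i = 0 then 1 else (∏ j ∈ Finset.range (i - 1), n j) * (n (i - 1) - 1)

/-- The dual idempotent `E_i*` with respect to the base point `x₀`: the diagonal
0-1 matrix with `(E_i*)_{yy} = 1` iff `delta x₀ y = i`. -/
noncomputable def Es {d : ℕ} {n : ℕ → ℕ} (x₀ : Vx d n) (i : ℕ) :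
    Matrix (Vx d n) (Vx d n) ℂ :=
  Matrix.of fun y z => if y = z ∧ delta x₀ y = i then 1 else 0

/-- The all-ones matrix `J`. -/
noncomputable def Jm (d : ℕ) (n : ℕ → ℕ) : Matrix (Vx d n) (Vx d n) ℂ :=
  Matrix.of fun _ _ => 1

/-- The matrices `G i j`. -/
noncomputable def G {d : ℕ} {n : ℕ → ℕ} (x₀ : Vx d n) (i j : ℕ) :
    Matrix (Vx d n) (Vx d n) ℂ :=
  if i < j then ((k n j : ℂ))⁻¹ • (Es x₀ i * A d n j * Es x₀ j)
  else if j < i then ((k n j : ℂ))⁻¹ • (Es x₀ i * A d n i * Es x₀ j)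
  else ((k n i : ℂ))⁻¹ • (Es x₀ i * Jm d n * Es x₀ i)

/-- The span `U` of the matrices `G i j`, `i, j ∈ [d]`. -/
noncomputable def Uspan {d : ℕ} {n : ℕ → ℕ} (x₀ : Vx d n) :
    Submodule ℂ (Matrix (Vx d n) (Vx d n) ℂ) :=
  Submodule.span ℂ (Set.range fun p : Fin (d + 1) × Fin (d + 1) => G x₀ p.1 p.2)

/-- The Terwilliger algebra of the wreath product with respect to `x₀`. -/
noncomputable def Ter {d : ℕ} {n : ℕ → ℕ} (x₀ : Vx d n) :
    Subalgebra ℂ (Matrix (Vx d n) (Vx d n) ℂ) :=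
  Algebra.adjoin ℂ
    ((Set.range fun i : Fin (d + 1) => A d n i) ∪ (Set.range fun i : Fin (d + 1) => Es x₀ i))

/-- The matrices `F i h`, for `1 ≤ i ≤ d` and `0 ≤ h ≤ i - 1`. -/
noncomputable def F {d : ℕ} {n : ℕ → ℕ} (x₀ : Vx d n) (i h : ℕ) :
    Matrix (Vx d n) (Vx d n) ℂ :=
  if h < i - 1 then
    (∑ j ∈ Finset.range (h + 1), (k n j : ℂ))⁻¹ •
        (∑ j ∈ Finset.range (h + 1), Es x₀ i * A d n j * Es x₀ i)
      - (∑ j ∈ Finset.range (h + 2), (k n j : ℂ))⁻¹ •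
          (∑ j ∈ Finset.range (h + 2), Es x₀ i * A d n j * Es x₀ i)
  else
    (∑ j ∈ Finset.range i, (k n j : ℂ))⁻¹ •
        (∑ j ∈ Finset.range i, Es x₀ i * A d n j * Es x₀ i)
      - G x₀ i i

/-- ball sizes -/
def Nb (n : ℕ → ℕ) (m : ℕ) : ℕ := ∏ j ∈ Finset.range m, n j

theorem delta_le {d : ℕ} {n : ℕ → ℕ} (x y : Vx d n) (m : ℕ) :
    delta x y ≤ m ↔ ∀ i : Fin d, m ≤ (i : ℕ) → x i = y i := by
  unfold delta
  rw [Finset.sup_le_iff]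
  constructor
  · intro H i hi
    by_contra hne
    have := H i (by simp [hne])
    omega
  · intro H i hi
    by_contra hne
    have := H i (by omega)
    simp [this] at hi

theorem delta_self {d : ℕ} {n : ℕ → ℕ} (x : Vx d n) : delta x x = 0 := by
  have := (delta_le x x 0).2 (fun _ _ => rfl)
  omega

theorem delta_comm {d : ℕ} {n : ℕ → ℕ} (x y : Vx d n) : delta x y = delta y x := by
  unfold delta
  simp only [ne_comm]

theorem delta_tri {d : ℕ} {n : ℕ → ℕ} {x y z : Vx d n} {m : ℕ}
    (h1 : delta x y ≤ m) (h2 : delta y z ≤ m) : delta x z ≤ m := by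
  rw [delta_le] at *
  intro i hi
  rw [h1 i hi, h2 i hi]

theorem delta_le_d {d : ℕ} {n : ℕ → ℕ} (x y : Vx d n) : delta x y ≤ d := by
  rw [delta_le]
  intro i hi
  have := i.2
  omega

/-- shells are unions of smaller balls -/
theorem delta_shell {d : ℕ} {n : ℕ → ℕ} {x₀ x y : Vx d n} {i : ℕ}
    (h1 : delta x y < i) : delta x₀ x = i ↔ delta x₀ y = i := by
  have key : ∀ x y : Vx d n, delta x y < i → delta x₀ x = i → delta x₀ y = i := by
    intro x y h1 hx
    have a : delta x₀ y ≤ i := delta_tri hx.le h1.le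
    by_contra hne
    have b : delta x₀ y ≤ i - 1 := by omega
    have c : delta y x ≤ i - 1 := by rw [delta_comm]; omega
    have := delta_tri b c
    omega
  exact ⟨key x y h1, key y x (by rwa [delta_comm])⟩

theorem card_ball {d : ℕ} {n : ℕ → ℕ} (x : Vx d n) (m : ℕ) (hm : m ≤ d) :
    (Finset.univ.filter fun y => delta x y ≤ m).card = Nb n m := by
  have : (Finset.univ.filter fun y => delta x y ≤ m) =
      Fintype.piFinset (fun i : Fin d => if (i : ℕ) < m then Finset.univ else {x i}) := by
    ext y
    simp only [Finset.mem_filter, Finset.mem_univ, true_and, Fintype.mem_piFinset, delta_le]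
    refine forall_congr' fun i => ?_
    by_cases h : (i : ℕ) < m
    · simp [h]
    · simp [h, not_lt.1 h, eq_comm]
  rw [this, Fintype.card_piFinset]
  have e : ∀ i : Fin d, (if (i : ℕ) < m then (Finset.univ : Finset (Fin (n i))) else {x i}).card
      = (fun j : ℕ => if j < m then n j else 1) i := by
    intro i
    by_cases h : (i : ℕ) < m <;> simp [h]
  rw [Finset.prod_congr rfl (fun i _ => e i),
    Fin.prod_univ_eq_prod_range (fun j : ℕ => if j < m then n j else 1) d]
  unfold Nb
  rw [← Finset.prod_filter]
  congr 1
  ext j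
  simp
  omega

theorem k_succ (n : ℕ → ℕ) (i : ℕ) : k n (i + 1) = Nb n i * (n i - 1) := by
  simp [k, Nb]

theorem Nb_succ (n : ℕ → ℕ) (i : ℕ) : Nb n (i + 1) = Nb n i * n i := by
  simp [Nb, Finset.prod_range_succ]

theorem Nb_pos {d : ℕ} {n : ℕ → ℕ} (hn : ∀ i < d, 2 ≤ n i) (m : ℕ) (hm : m ≤ d) :
    0 < Nb n m := by
  refine Finset.prod_pos fun j hj => ?_
  have := hn j (by simp at hj; omega)
  omega

theorem Nb_add {d : ℕ} {n : ℕ → ℕ} (hn : ∀ i < d, 2 ≤ n i) (m : ℕ) (hm : m < d) :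
    Nb n (m + 1) = Nb n m + k n (m + 1) := by
  rw [k_succ, Nb_succ]
  have := hn m hm
  obtain ⟨t, ht⟩ : ∃ t, n m = t + 1 := ⟨n m - 1, by omega⟩
  rw [ht]; simp; ring

theorem sum_k {d : ℕ} {n : ℕ → ℕ} (hn : ∀ i < d, 2 ≤ n i) (m : ℕ) (hm : m ≤ d) :
    ∑ j ∈ Finset.range (m + 1), k n j = Nb n m := by
  induction m with
  | zero => simp [k, Nb]
  | succ m ih => rw [Finset.sum_range_succ, ih (by omega), Nb_add hn m (by omega)]

theorem card_shell {d : ℕ} {n : ℕ → ℕ} (hn : ∀ i < d, 2 ≤ n i) (x : Vx d n) (i : ℕ)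
    (hi : 1 ≤ i) (hid : i ≤ d) :
    (Finset.univ.filter fun y => delta x y = i).card = k n i := by
  obtain ⟨m, rfl⟩ : ∃ m, i = m + 1 := ⟨i - 1, by omega⟩
  have h1 := card_ball x (m + 1) hid
  have h2 := card_ball x m (by omega)
  have h3 := Nb_add hn m (by omega)
  have : (Finset.univ.filter fun y => delta x y ≤ m + 1) =
      (Finset.univ.filter fun y => delta x y ≤ m) ∪
      (Finset.univ.filter fun y => delta x y = m + 1) := by
    ext y; simp; omega
  rw [this, Finset.card_union_of_disjoint] at h1
  · omega
  · rw [Finset.disjoint_filter]; intro y _ h; omega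

/-- normalising constants -/
def cc (n : ℕ → ℕ) (i m : ℕ) : ℕ := if m < i then Nb n m else k n i

theorem card_cc {d : ℕ} {n : ℕ → ℕ} (hn : ∀ i < d, 2 ≤ n i) (x₀ x : Vx d n) (i m : ℕ)
    (hi : 1 ≤ i) (hid : i ≤ d) (hm : m ≤ i) (hx : delta x₀ x = i) :
    (Finset.univ.filter fun y => delta x₀ y = i ∧ delta x y ≤ m).card = cc n i m := by
  unfold cc
  split_ifs with h
  · rw [← card_ball x m (by omega)]
    congr 1
    ext y
    simp only [Finset.mem_filter, Finset.mem_univ, true_and, and_iff_right_iff_imp]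
    intro hy
    exact (delta_shell (by omega)).1 hx
  · rw [← card_shell hn x₀ i hi hid]
    congr 1
    ext y
    simp only [Finset.mem_filter, Finset.mem_univ, true_and, and_iff_left_iff_imp]
    intro hy
    have : m = i := by omega
    subst this
    exact delta_tri (by rw [delta_comm]; exact hx.le) hy.le

theorem cc_pos {d : ℕ} {n : ℕ → ℕ} (hn : ∀ i < d, 2 ≤ n i) (i m : ℕ)
    (hi : 1 ≤ i) (hid : i ≤ d) : 0 < cc n i m := by
  unfold cc
  split_ifs with h
  · exact Nb_pos hn m (by omega)
  · obtain ⟨m, rfl⟩ : ∃ m, i = m + 1 := ⟨i - 1, by omega⟩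
    rw [k_succ]
    have := hn m (by omega)
    exact Nat.mul_pos (Nb_pos hn m (by omega)) (by omega)

/-- averaging matrices -/
noncomputable def Rm {d : ℕ} {n : ℕ → ℕ} (x₀ : Vx d n) (i m : ℕ) :
    Matrix (Vx d n) (Vx d n) ℂ :=
  Matrix.of fun x y => if delta x₀ x = i ∧ delta x₀ y = i ∧ delta x y ≤ m then
    ((cc n i m : ℕ) : ℂ)⁻¹ else 0

theorem Es_eq {d : ℕ} {n : ℕ → ℕ} (x₀ : Vx d n) (i : ℕ) :
    Es x₀ i = Matrix.diagonal fun y => if delta x₀ y = i then (1 : ℂ) else 0 := by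
  ext y z
  simp only [Es, Matrix.of_apply, Matrix.diagonal_apply]
  by_cases h : y = z <;> simp [h]

theorem EsME {d : ℕ} {n : ℕ → ℕ} (x₀ : Vx d n) (i : ℕ) (M : Matrix (Vx d n) (Vx d n) ℂ)
    (x y : Vx d n) :
    (Es x₀ i * M * Es x₀ i) x y = if delta x₀ x = i ∧ delta x₀ y = i then M x y else 0 := by
  rw [Es_eq, Matrix.mul_diagonal, Matrix.diagonal_mul]
  by_cases h : delta x₀ x = i <;> by_cases h' : delta x₀ y = i <;> simp [h, h']

theorem sumEAE {d : ℕ} {n : ℕ → ℕ} (hn : ∀ i < d, 2 ≤ n i) (x₀ : Vx d n) (i m : ℕ)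
    (hid : i ≤ d) (hm : m < i) :
    (∑ j ∈ Finset.range (m + 1), (k n j : ℂ))⁻¹ •
        (∑ j ∈ Finset.range (m + 1), Es x₀ i * A d n j * Es x₀ i) = Rm x₀ i m := by
  rw [← Nat.cast_sum, sum_k hn m (by omega)]
  ext x y
  rw [Matrix.smul_apply, Matrix.sum_apply]
  simp only [EsME, Rm, A, Matrix.of_apply, cc, hm, if_true]
  by_cases h : delta x₀ x = i ∧ delta x₀ y = i
  · by_cases h2 : delta x y ≤ m
    · have h3 : delta x y < m + 1 := by omega
      simp [h, h2, h3]
    · have h3 : ¬ delta x y < m + 1 := by omega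
      simp [h, h2, h3]
  · have h2 : ¬ (delta x₀ x = i ∧ delta x₀ y = i ∧ delta x y ≤ m) := by tauto
    simp [h, h2]

theorem G_eq {d : ℕ} {n : ℕ → ℕ} (x₀ : Vx d n) (i : ℕ) :
    G x₀ i i = Rm x₀ i i := by
  ext x y
  simp only [G, lt_irrefl, if_false, Matrix.smul_apply, EsME, Jm, Rm, Matrix.of_apply, cc]
  by_cases h : delta x₀ x = i ∧ delta x₀ y = i
  · have : delta x y ≤ i := delta_tri (by rw [delta_comm]; exact h.1.le) h.2.le
    simp [h, this]
  · have h2 : ¬ (delta x₀ x = i ∧ delta x₀ y = i ∧ delta x y ≤ i) := by tauto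
    simp [h, h2]

theorem F_eq {d : ℕ} {n : ℕ → ℕ} (hn : ∀ i < d, 2 ≤ n i) (x₀ : Vx d n) (i h : ℕ)
    (hid : i ≤ d) (hi : 1 ≤ i) (hh : h ≤ i - 1) :
    F x₀ i h = Rm x₀ i h - Rm x₀ i (h + 1) := by
  unfold F
  split_ifs with c
  · rw [sumEAE hn x₀ i h hid (by omega), sumEAE hn x₀ i (h + 1) hid (by omega)]
  · obtain ⟨m, rfl⟩ : ∃ m, i = m + 1 := ⟨i - 1, by omega⟩
    have : h = m := by omega
    subst this
    rw [sumEAE hn x₀ _ h hid (by omega), G_eq]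

theorem Rm_symm {d : ℕ} {n : ℕ → ℕ} (x₀ : Vx d n) (i m : ℕ) :
    (Rm x₀ i m)ᵀ = Rm x₀ i m := by
  ext x y
  simp only [Rm, Matrix.transpose_apply, Matrix.of_apply, delta_comm y x]
  congr 1
  apply propext
  tauto

theorem Rm_colsum {d : ℕ} {n : ℕ → ℕ} (hn : ∀ i < d, 2 ≤ n i) (x₀ : Vx d n) (i m : ℕ)
    (hi : 1 ≤ i) (hid : i ≤ d) (hm : m ≤ i) (z : Vx d n) :
    ∑ y, Rm x₀ i m y z = if delta x₀ z = i then 1 else 0 := by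
  simp only [Rm, Matrix.of_apply]
  split_ifs with hz
  · rw [← Finset.sum_filter, Finset.sum_const]
    have : (Finset.univ.filter fun y => delta x₀ y = i ∧ delta x₀ z = i ∧ delta y z ≤ m)
        = (Finset.univ.filter fun y => delta x₀ y = i ∧ delta z y ≤ m) := by
      ext y; simp [hz, delta_comm y z]
    rw [this, card_cc hn x₀ z i m hi hid hm hz, nsmul_eq_mul, mul_inv_cancel₀]
    exact_mod_cast (cc_pos hn i m hi hid).ne'
  · simp [hz]

/-- the ball matrix -/
noncomputable def Bm (d : ℕ) (n : ℕ → ℕ) (m : ℕ) : Matrix (Vx d n) (Vx d n) ℂ :=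
  Matrix.of fun x y => if delta x y ≤ m then 1 else 0

theorem A_zero (d : ℕ) (n : ℕ → ℕ) : A d n 0 = Bm d n 0 := by
  ext x y; simp [A, Bm]

theorem A_succ (d : ℕ) (n : ℕ → ℕ) (m : ℕ) : A d n (m + 1) = Bm d n (m + 1) - Bm d n m := by
  ext x y
  simp only [A, Bm, Matrix.of_apply, Matrix.sub_apply]
  rcases lt_trichotomy (delta x y) (m + 1) with h | h | h
  · rw [if_neg (by omega), if_pos (by omega), if_pos (by omega)]; simp
  · rw [if_pos (by omega), if_pos (by omega), if_neg (by omega)]; simp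
  · rw [if_neg (by omega), if_neg (by omega), if_neg (by omega)]; simp

/-- constancy of the averaging matrices on balls -/
theorem Rm_const {d : ℕ} {n : ℕ → ℕ} (x₀ : Vx d n) (i m : ℕ) {x y z : Vx d n}
    (h1 : delta x y < i) (h2 : delta x y ≤ m) : Rm x₀ i m y z = Rm x₀ i m x z := by
  simp only [Rm, Matrix.of_apply]
  congr 1
  apply propext
  rw [delta_shell (x₀ := x₀) h1]
  have : delta y z ≤ m ↔ delta x z ≤ m :=
    ⟨fun h => delta_tri h2 h, fun h => delta_tri (by rwa [delta_comm]) h⟩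
  rw [this]

theorem BF {d : ℕ} {n : ℕ → ℕ} (hn : ∀ i < d, 2 ≤ n i) (x₀ : Vx d n) (i h m : ℕ)
    (hid : i ≤ d) (hi : 1 ≤ i) (hh : h ≤ i - 1) :
    ∃ c : ℂ, Bm d n m * (Rm x₀ i h - Rm x₀ i (h + 1)) = c • (Rm x₀ i h - Rm x₀ i (h + 1)) := by
  by_cases hm : m ≤ h
  · refine ⟨(Nb n m : ℕ), ?_⟩
    ext x z
    rw [Matrix.mul_apply]
    simp only [Bm, Matrix.of_apply, ite_mul, one_mul, zero_mul, Matrix.smul_apply]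
    rw [← Finset.sum_filter, ← card_ball x m (by omega), smul_eq_mul, ← nsmul_eq_mul,
      ← Finset.sum_const]
    refine Finset.sum_congr rfl fun y hy => ?_
    simp only [Finset.mem_filter, Finset.mem_univ, true_and] at hy
    simp only [Matrix.sub_apply]
    rw [Rm_const x₀ i h (x := x) (y := y) (by omega) (by omega),
      Rm_const x₀ i (h + 1) (x := x) (y := y) (by omega) (by omega)]
  · refine ⟨0, ?_⟩
    rw [zero_smul]
    ext x z
    rw [Matrix.mul_apply]
    simp only [Bm, Matrix.of_apply, ite_mul, one_mul, zero_mul, Matrix.zero_apply]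
    by_cases hxz : delta x z ≤ m
    · have : ∑ y, (Rm x₀ i h - Rm x₀ i (h + 1)) y z = 0 := by
        simp only [Matrix.sub_apply]
        rw [Finset.sum_sub_distrib, Rm_colsum hn x₀ i h hi hid (by omega),
          Rm_colsum hn x₀ i (h + 1) hi hid (by omega), sub_self]
      refine Eq.trans ?_ this
      refine Finset.sum_congr rfl fun y _ => ?_
      split_ifs with hy
      · rfl
      · have hyz : ¬ delta y z ≤ m := fun hc => hy (delta_tri hxz (by rwa [delta_comm]))
        have a1 : ¬ delta y z ≤ h := by omega
        have a2 : ¬ delta y z ≤ h + 1 := by omega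
        simp [Rm, a1, a2]
    · refine Finset.sum_eq_zero fun y _ => ?_
      split_ifs with hy
      · have hyz : ¬ delta y z ≤ m := fun hc => hxz (delta_tri hy hc)
        have a1 : ¬ delta y z ≤ h := by omega
        have a2 : ¬ delta y z ≤ h + 1 := by omega
        simp [Rm, a1, a2]
      · rfl

theorem AF {d : ℕ} {n : ℕ → ℕ} (hn : ∀ i < d, 2 ≤ n i) (x₀ : Vx d n) (i h j : ℕ)
    (hid : i ≤ d) (hi : 1 ≤ i) (hh : h ≤ i - 1) :
    ∃ c : ℂ, A d n j * (Rm x₀ i h - Rm x₀ i (h + 1)) = c • (Rm x₀ i h - Rm x₀ i (h + 1)) := by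
  cases j with
  | zero => rw [A_zero]; exact BF hn x₀ i h 0 hid hi hh
  | succ m =>
    obtain ⟨c1, h1⟩ := BF hn x₀ i h (m + 1) hid hi hh
    obtain ⟨c2, h2⟩ := BF hn x₀ i h m hid hi hh
    exact ⟨c1 - c2, by rw [A_succ, Matrix.sub_mul, h1, h2, sub_smul]⟩

theorem EF {d : ℕ} {n : ℕ → ℕ} (x₀ : Vx d n) (i h j : ℕ) :
    ∃ c : ℂ, Es x₀ j * (Rm x₀ i h - Rm x₀ i (h + 1)) = c • (Rm x₀ i h - Rm x₀ i (h + 1)) := by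
  refine ⟨if i = j then 1 else 0, ?_⟩
  ext x z
  rw [Es_eq, Matrix.diagonal_mul, Matrix.smul_apply, smul_eq_mul]
  by_cases hx : delta x₀ x = i
  · rw [hx]
  · simp [Rm, hx]

theorem Rm_mul {d : ℕ} {n : ℕ → ℕ} (hn : ∀ i < d, 2 ≤ n i) (x₀ : Vx d n) (i m l : ℕ)
    (hi : 1 ≤ i) (hid : i ≤ d) (hl : l ≤ i) (hml : m ≤ l) :
    Rm x₀ i m * Rm x₀ i l = Rm x₀ i l := by
  ext x z
  rw [Matrix.mul_apply]
  have key : ∀ y, Rm x₀ i m x y * Rm x₀ i l y z = Rm x₀ i m y x * Rm x₀ i l x z := by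
    intro y
    have hs : Rm x₀ i m x y = Rm x₀ i m y x := by
      conv_lhs => rw [← Rm_symm]
      rfl
    rw [hs]
    by_cases hc : delta x₀ y = i ∧ delta x₀ x = i ∧ delta y x ≤ m
    · congr 1
      simp only [Rm, Matrix.of_apply, hc.1, hc.2.1, true_and]
      congr 2
      apply propext
      have h2 : delta y x ≤ l := hc.2.2.trans hml
      exact ⟨fun h => delta_tri (by rwa [delta_comm]) h, fun h => delta_tri h2 h⟩
    · have : Rm x₀ i m y x = 0 := by simp only [Rm, Matrix.of_apply, if_neg hc]
      rw [this]; simp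
  rw [Finset.sum_congr rfl (fun y _ => key y), ← Finset.sum_mul,
    Rm_colsum hn x₀ i m hi hid (by omega)]
  by_cases hx : delta x₀ x = i
  · simp [hx]
  · simp [hx, Rm]

theorem F_idem {d : ℕ} {n : ℕ → ℕ} (hn : ∀ i < d, 2 ≤ n i) (x₀ : Vx d n) (i h : ℕ)
    (hid : i ≤ d) (hi : 1 ≤ i) (hh : h ≤ i - 1) :
    F x₀ i h * F x₀ i h = F x₀ i h := by
  have e1 := Rm_mul hn x₀ i h h hi hid (by omega) le_rfl
  have e2 := Rm_mul hn x₀ i h (h + 1) hi hid (by omega) (by omega)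
  have e3 := Rm_mul hn x₀ i (h + 1) (h + 1) hi hid (by omega) le_rfl
  have e4 : Rm x₀ i (h + 1) * Rm x₀ i h = Rm x₀ i (h + 1) := by
    have := congrArg Matrix.transpose e2
    rwa [Matrix.transpose_mul, Rm_symm, Rm_symm] at this
  rw [F_eq hn x₀ i h hid hi hh, Matrix.sub_mul, Matrix.mul_sub, Matrix.mul_sub, e1, e2, e3, e4]
  simp

theorem F_ter {d : ℕ} {n : ℕ → ℕ} (hn : ∀ i < d, 2 ≤ n i) (x₀ : Vx d n) (i h : ℕ)
    (hid : i ≤ d) (hi : 1 ≤ i) (hh : h ≤ i - 1) (t : Matrix (Vx d n) (Vx d n) ℂ)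
    (ht : t ∈ Ter x₀) :
    ∃ c : ℂ, t * F x₀ i h = c • F x₀ i h ∧ F x₀ i h * t = c • F x₀ i h := by
  rw [F_eq hn x₀ i h hid hi hh]
  have hsym : (Rm x₀ i h - Rm x₀ i (h + 1))ᵀ = Rm x₀ i h - Rm x₀ i (h + 1) := by
    rw [Matrix.transpose_sub, Rm_symm, Rm_symm]
  have swap : ∀ s : Matrix (Vx d n) (Vx d n) ℂ, sᵀ = s → ∀ c : ℂ,
      s * (Rm x₀ i h - Rm x₀ i (h + 1)) = c • (Rm x₀ i h - Rm x₀ i (h + 1)) →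
      (Rm x₀ i h - Rm x₀ i (h + 1)) * s = c • (Rm x₀ i h - Rm x₀ i (h + 1)) := by
    intro s hs c hc
    have := congrArg Matrix.transpose hc
    rwa [Matrix.transpose_mul, Matrix.transpose_smul, hsym, hs] at this
  unfold Ter at ht
  induction ht using Algebra.adjoin_induction with
  | mem s hs =>
    rcases hs with ⟨j, rfl⟩ | ⟨j, rfl⟩
    · obtain ⟨c, hc⟩ := AF hn x₀ i h j hid hi hh
      refine ⟨c, hc, swap _ ?_ c hc⟩
      ext x y
      simp only [A, Matrix.transpose_apply, Matrix.of_apply, delta_comm y x]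
    · obtain ⟨c, hc⟩ := EF x₀ i h j
      refine ⟨c, hc, swap _ ?_ c hc⟩
      simp only [Es_eq, Matrix.diagonal_transpose]
  | algebraMap r =>
    refine ⟨r, ?_, ?_⟩
    · rw [← Algebra.smul_def]
    · rw [← Algebra.commutes, ← Algebra.smul_def]
  | add a b _ _ ha hb =>
    obtain ⟨c, h1, h2⟩ := ha
    obtain ⟨c', h1', h2'⟩ := hb
    exact ⟨c + c', by rw [Matrix.add_mul, h1, h1', add_smul],
      by rw [Matrix.mul_add, h2, h2', add_smul]⟩
  | mul a b _ _ ha hb =>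
    obtain ⟨c, h1, h2⟩ := ha
    obtain ⟨c', h1', h2'⟩ := hb
    refine ⟨c * c', ?_, ?_⟩
    · rw [Matrix.mul_assoc, h1', Matrix.mul_smul, h1, smul_smul, mul_comm]
    · rw [← Matrix.mul_assoc, h2, Matrix.smul_mul, h2', smul_smul]

theorem F_zero_iff {d : ℕ} {n : ℕ → ℕ} (hn : ∀ i < d, 2 ≤ n i) (x₀ : Vx d n) (i h : ℕ)
    (hid : i ≤ d) (hi : 1 ≤ i) (hh : h ≤ i - 1) :
    F x₀ i h = 0 ↔ h = i - 1 ∧ n (i - 1) = 2 := by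
  have hcc : F x₀ i h = 0 ↔ cc n i h = cc n i (h + 1) := by
    rw [F_eq hn x₀ i h hid hi hh]
    constructor
    · intro H
      have hpos : 0 < (Finset.univ.filter fun y => delta x₀ y = i).card := by
        rw [card_shell hn x₀ i hi hid]
        have := cc_pos hn i i hi hid
        simpa [cc] using this
      obtain ⟨x, hx⟩ := Finset.card_pos.1 hpos
      simp only [Finset.mem_filter, Finset.mem_univ, true_and] at hx
      have := congrFun (congrFun H x) x
      simp only [Rm, Matrix.sub_apply, Matrix.of_apply, hx, delta_self, Nat.zero_le, and_self,
        if_true, Matrix.zero_apply, sub_eq_zero, _root_.inv_inj] at this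
      exact_mod_cast this
    · intro H
      ext x y
      simp only [Rm, Matrix.sub_apply, Matrix.of_apply, Matrix.zero_apply, sub_eq_zero, H]
      congr 1
      apply propext
      by_cases hx : delta x₀ x = i
      · have h1 := card_cc hn x₀ x i h hi hid (by omega) hx
        have h2 := card_cc hn x₀ x i (h + 1) hi hid (by omega) hx
        have hsub : (Finset.univ.filter fun y => delta x₀ y = i ∧ delta x y ≤ h) ⊆
            (Finset.univ.filter fun y => delta x₀ y = i ∧ delta x y ≤ h + 1) := by
          intro w hw
          simp only [Finset.mem_filter, Finset.mem_univ, true_and] at hw ⊢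
          exact ⟨hw.1, by omega⟩
        have heq := Finset.eq_of_subset_of_card_le hsub (by omega)
        have := Finset.ext_iff.1 heq y
        simp only [Finset.mem_filter, Finset.mem_univ, true_and] at this
        rw [this]
      · simp [hx]
  rw [hcc]
  obtain ⟨m, rfl⟩ : ∃ m, i = m + 1 := ⟨i - 1, by omega⟩
  simp only [Nat.add_sub_cancel] at hh ⊢
  have hp := Nb_pos hn h (by omega)
  have h2 := hn h (by omega)
  rcases hh.lt_or_eq with hlt | rfl
  · simp only [cc, if_pos (show h < m + 1 by omega), if_pos (show h + 1 < m + 1 by omega)]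
    rw [Nb_succ]
    constructor
    · intro H; nlinarith
    · intro H; omega
  · simp only [cc, if_pos (Nat.lt_succ_self h), lt_irrefl, if_false]
    rw [k_succ]
    constructor
    · intro H
      refine ⟨by trivial, ?_⟩
      have : Nb n h * 1 = Nb n h * (n h - 1) := by rw [← H, mul_one]
      have := Nat.eq_of_mul_eq_mul_left hp this
      omega
    · rintro ⟨-, H⟩
      rw [H]; simp

open scoped Classical in
/-- `F i h = 0` iff `h = i - 1` and `n_i = 2` (paper's `n_i` is `n (i-1)`),
so the family `{F i h : 1 ≤ i ≤ d, 0 ≤ h ≤ i-1}` has exactly `d(d+1)/2 - b` nonzero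
members; each nonzero `F i h` is an idempotent commuting with every element of the
Terwilliger algebra `T(x₀)` and spans a 1-dimensional two-sided ideal of `T(x₀)`. -/
theorem stmt7 (d : ℕ) (hd : 1 ≤ d) (n : ℕ → ℕ) (hn : ∀ i < d, 2 ≤ n i)
    (x₀ : Vx d n) :
    (∀ i, 1 ≤ i → i ≤ d → ∀ h ≤ i - 1,
      (F x₀ i h = 0 ↔ h = i - 1 ∧ n (i - 1) = 2)) ∧
    ((((Finset.Icc 1 d).sigma fun i => Finset.range i).filter
        fun p => F x₀ p.1 p.2 ≠ 0).card
      = d * (d + 1) / 2 - ((Finset.range d).filter fun i => n i = 2).card) ∧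
    (∀ i, 1 ≤ i → i ≤ d → ∀ h ≤ i - 1, F x₀ i h ≠ 0 →
      F x₀ i h * F x₀ i h = F x₀ i h ∧
      (∀ t ∈ Ter x₀, t * F x₀ i h = F x₀ i h * t) ∧
      (∀ t ∈ Ter x₀, ∃ c : ℂ, t * F x₀ i h = c • F x₀ i h)) := by
  have hz : ∀ i, 1 ≤ i → i ≤ d → ∀ h ≤ i - 1,
      (F x₀ i h = 0 ↔ h = i - 1 ∧ n (i - 1) = 2) :=
    fun i hi hid h hh => F_zero_iff hn x₀ i h hid hi hh
  refine ⟨hz, ?_, ?_⟩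
  · have htot : ((Finset.Icc 1 d).sigma fun i => Finset.range i).card = d * (d + 1) / 2 := by
      rw [Finset.card_sigma]
      simp only [Finset.card_range]
      have : ∑ i ∈ Finset.Icc 1 d, i = ∑ i ∈ Finset.range (d + 1), i := by
        rw [Finset.sum_range_eq_add_Ico _ (by omega), zero_add]
        rfl
      rw [this, Finset.sum_range_id, Nat.add_sub_cancel, mul_comm]
    have hb : (((Finset.Icc 1 d).sigma fun i => Finset.range i).filter
        fun p => ¬ (F x₀ p.1 p.2 ≠ 0)).card = ((Finset.range d).filter fun i => n i = 2).card := by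
      symm
      refine Finset.card_bij (fun i _ => ⟨i + 1, i⟩) ?_ ?_ ?_
      · intro i hi
        simp only [Finset.mem_filter, Finset.mem_range] at hi
        simp only [Finset.mem_filter, Finset.mem_sigma, Finset.mem_Icc, Finset.mem_range, not_not]
        exact ⟨⟨⟨by omega, by omega⟩, by omega⟩,
          (hz (i + 1) (by omega) (by omega) i (by omega)).2 ⟨rfl, hi.2⟩⟩
      · intro a _ b _ hab
        simpa using hab
      · rintro ⟨i, h⟩ hp
        simp only [Finset.mem_filter, Finset.mem_sigma, Finset.mem_Icc, Finset.mem_range,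
          not_not] at hp
        obtain ⟨⟨⟨h1, h2⟩, h3⟩, h4⟩ := hp
        obtain ⟨e1, e2⟩ := (hz i h1 h2 h (by omega)).1 h4
        obtain ⟨m, rfl⟩ : ∃ m, i = m + 1 := ⟨i - 1, by omega⟩
        simp only [Nat.add_sub_cancel] at e1 e2
        subst e1
        exact ⟨h, by simp [e2]; omega, rfl⟩
    rw [← htot, ← hb]
    have := Finset.card_filter_add_card_filter_not
      (s := (Finset.Icc 1 d).sigma fun i => Finset.range i) (fun p => F x₀ p.1 p.2 ≠ 0)
    omega
  · intro i hi hid h hh _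
    refine ⟨F_idem hn x₀ i h hid hi hh, ?_, ?_⟩
    · intro t ht
      obtain ⟨c, h1, h2⟩ := F_ter hn x₀ i h hid hi hh t ht
      rw [h1, h2]
    · intro t ht
      obtain ⟨c, h1, _⟩ := F_ter hn x₀ i h hid hi hh t ht
      exact ⟨c, h1⟩
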